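/- For every n ≥ 4, every constant power circuit that properly represents the product ∏_{i=4}^{n} (tower(i−1) + 1) has at least 2^{n−3} vertices. -/

import Mathlib

/-- A constant power circuit: a finite nonempty DAG without multiple edges, with
edge labels in `{-1, 1}`, a nonempty set `M` of marked vertices with signs
`ν : M → {-1, 1}`, together with its evaluation function `eval`, which satisfies
the defining recursion: `eval v = 0` if `v` has no outgoing edges, and
`eval v = 2 ^ (∑ edges e = v→w, μ(e) · eval w)` otherwise.

Vertices are `Fin n`; `lab u v = 0` means there is no edge `u → v`, and
`lab u v = ±1` means there is an edge `u → v` labelled `±1` (this encodes both the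
edge set and the labelling `μ`, and there are no multiple edges by construction).
Acyclicity is expressed by well-foundedness of the child relation, which also makes
`eval` the unique function satisfying `evalSpec`. -/
structure PowerCircuit where
  n : ℕ
  npos : 0 < n
  lab : Fin n → Fin n → ℤ
  labValid : ∀ u v, lab u v = 0 ∨ lab u v = 1 ∨ lab u v = -1
  acyclic : WellFounded (fun u v : Fin n => lab v u ≠ 0)
  M : Finset (Fin n)
  Mne : M.Nonempty
  nu : Fin n → ℤ
  nuValid : ∀ v ∈ M, nu v = 1 ∨ nu v = -1
  eval : Fin n → ℝ
  evalSpec : ∀ v, eval v =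
    if ∀ w, lab v w = 0 then 0
    else (2 : ℝ) ^ (∑ w, (lab v w : ℝ) * eval w)

namespace PowerCircuit

/-- The value `ℰ(P) = ∑_{v ∈ M} ν(v) · ℰ(v)` of a constant power circuit. -/
noncomputable def value (P : PowerCircuit) : ℝ :=
  ∑ v ∈ P.M, (P.nu v : ℝ) * P.eval v

/-- A circuit is proper if every vertex evaluates to a natural number. -/
def Proper (P : PowerCircuit) : Prop := ∀ v, ∃ m : ℕ, P.eval v = m

/-- `P` properly represents the integer `N`. -/
def Represents (P : PowerCircuit) (N : ℤ) : Prop := P.Proper ∧ P.value = N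

/-- A zero vertex: a vertex with no outgoing edges. -/
def IsZeroVertex (P : PowerCircuit) (v : Fin P.n) : Prop := ∀ w, P.lab v w = 0

/-- The trivial circuit consists of a single (marked) vertex. -/
def Trivial (P : PowerCircuit) : Prop := P.n = 1

/-- Trimmed: every vertex is reachable from a marked vertex along a directed path. -/
def Trimmed (P : PowerCircuit) : Prop :=
  ∀ v, ∃ m ∈ P.M, Relation.ReflTransGen (fun a b => P.lab a b ≠ 0) m v

/-- Standard form: trimmed, exactly one zero vertex, the zero vertex is unmarked
unless the circuit is trivial, and no vertex with more than one outgoing edge has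
an edge into the zero vertex. -/
def StandardForm (P : PowerCircuit) : Prop :=
  P.Trimmed ∧
  (∃! z, P.IsZeroVertex z) ∧
  (P.Trivial ∨ ∀ z, P.IsZeroVertex z → z ∉ P.M) ∧
  (∀ v z, P.IsZeroVertex z → P.lab v z ≠ 0 → ∀ w, P.lab v w ≠ 0 → w = z)

/-- No redundant pair of edges: no two distinct edges `v → v₁`, `v → v₂` with
opposite labels and `ℰ(v₁) = ℰ(v₂)`. -/
def NoRedundantPairs (P : PowerCircuit) : Prop :=
  ∀ v v₁ v₂ : Fin P.n, v₁ ≠ v₂ → P.lab v v₁ ≠ 0 → P.lab v v₂ ≠ 0 →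
    P.lab v v₁ = -P.lab v v₂ → P.eval v₁ ≠ P.eval v₂

/-- No superfluous pair of edges: no two distinct edges `v → v₁`, `v → v₂` with
opposite labels and `ℰ(v₁) = 2 ℰ(v₂)`. -/
def NoSuperfluousPairs (P : PowerCircuit) : Prop :=
  ∀ v v₁ v₂ : Fin P.n, v₁ ≠ v₂ → P.lab v v₁ ≠ 0 → P.lab v v₂ ≠ 0 →
    P.lab v v₁ = -P.lab v v₂ → P.eval v₁ ≠ 2 * P.eval v₂

/-- Reduced: standard form, distinct vertices have distinct evaluations, and no
redundant or superfluous pairs of edges. -/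
def Reduced (P : PowerCircuit) : Prop :=
  P.StandardForm ∧ (∀ v₁ v₂ : Fin P.n, P.eval v₁ = P.eval v₂ → v₁ = v₂) ∧
  P.NoRedundantPairs ∧ P.NoSuperfluousPairs

/-- Normal form: proper and reduced; for every vertex all of whose out-edges lead
to non-zero vertices, the numbers `log₂ ℰ(β(e))` pairwise differ by at least `2`;
and, unless the circuit is trivial, the numbers `log₂ ℰ(v)`, `v ∈ M`, pairwise
differ by at least `2`. -/
def NormalForm (P : PowerCircuit) : Prop :=
  P.Proper ∧ P.Reduced ∧
  (∀ v : Fin P.n, (∀ w, P.lab v w ≠ 0 → ¬P.IsZeroVertex w) →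
    ∀ w₁ w₂, P.lab v w₁ ≠ 0 → P.lab v w₂ ≠ 0 → w₁ ≠ w₂ →
      2 ≤ |Real.logb 2 (P.eval w₁) - Real.logb 2 (P.eval w₂)|) ∧
  (P.Trivial ∨ ∀ v₁ ∈ P.M, ∀ v₂ ∈ P.M, v₁ ≠ v₂ →
      2 ≤ |Real.logb 2 (P.eval v₁) - Real.logb 2 (P.eval v₂)|)

/-- Isomorphism of constant power circuits: a bijection of vertices preserving
edges with their labels, marked vertices, and the signs of marked vertices. -/
def Isomorphic (P Q : PowerCircuit) : Prop :=
  ∃ φ : Fin P.n ≃ Fin Q.n,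
    (∀ u v, Q.lab (φ u) (φ v) = P.lab u v) ∧
    (∀ v, φ v ∈ Q.M ↔ v ∈ P.M) ∧
    (∀ v ∈ P.M, Q.nu (φ v) = P.nu v)

/-- The number of edges of a power circuit. -/
def edgeCount (P : PowerCircuit) : ℕ :=
  (Finset.univ.filter fun p : Fin P.n × Fin P.n => P.lab p.1 p.2 ≠ 0).card

end PowerCircuit

/-- The tower function: `tower 1 = 2` and `tower (j+1) = 2 ^ tower j`
(so `tower j` is a tower of `j` twos). -/
def tower : ℕ → ℕ
  | 0 => 1
  | j + 1 => 2 ^ tower j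

/-- `TRep k N`: `N` has a signed binary expansion with at most `k` nonzero digits. -/
inductive TRep : ℕ → ℤ → Prop
  | zero (k : ℕ) : TRep k 0
  | dbl (k : ℕ) (N : ℤ) : TRep k N → TRep k (2 * N)
  | pos (k : ℕ) (N : ℤ) : TRep k N → TRep (k + 1) (2 * N + 1)
  | neg (k : ℕ) (N : ℤ) : TRep k N → TRep (k + 1) (2 * N - 1)

theorem TRep.of_eq {k : ℕ} {N N' : ℤ} (h : TRep k N) (e : N = N') : TRep k N' := e ▸ h

theorem TRep.succ {k : ℕ} {N : ℤ} (h : TRep k N) : TRep (k + 1) N := by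
  induction h with
  | zero k => exact .zero _
  | dbl k N _ ih => exact .dbl _ _ ih
  | pos k N _ ih => exact .pos _ _ ih
  | neg k N _ ih => exact .neg _ _ ih

theorem TRep.add_one {k : ℕ} {N : ℤ} (h : TRep k N) :
    TRep (k + 1) (N + 1) ∧ TRep (k + 1) (N - 1) := by
  induction h with
  | zero k => exact ⟨(TRep.pos k 0 (.zero k)).of_eq (by ring), (TRep.neg k 0 (.zero k)).of_eq (by ring)⟩
  | dbl k N h ih => exact ⟨.pos _ _ h, .neg _ _ h⟩
  | pos k N h ih =>
    exact ⟨(TRep.dbl _ _ ih.1).succ.of_eq (by ring), (TRep.dbl _ _ h).succ.succ.of_eq (by ring)⟩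
  | neg k N h ih =>
    exact ⟨(TRep.dbl _ _ h).succ.succ.of_eq (by ring), (TRep.dbl _ _ ih.2).succ.of_eq (by ring)⟩

theorem TRep.add_pow (a : ℕ) : ∀ {k : ℕ} {N : ℤ}, TRep k N →
    TRep (k + 1) (N + 2 ^ a) ∧ TRep (k + 1) (N - 2 ^ a) := by
  induction a with
  | zero => intro k N h; simpa using h.add_one
  | succ a ih =>
    intro k N h
    cases h with
    | zero =>
      have := ih (TRep.zero k)
      exact ⟨(TRep.dbl _ _ this.1).of_eq (by ring), (TRep.dbl _ _ this.2).of_eq (by ring)⟩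
    | dbl _ N h =>
      exact ⟨(TRep.dbl _ _ (ih h).1).of_eq (by ring), (TRep.dbl _ _ (ih h).2).of_eq (by ring)⟩
    | pos k N h =>
      exact ⟨(TRep.pos _ _ (ih h).1).of_eq (by ring), (TRep.pos _ _ (ih h).2).of_eq (by ring)⟩
    | neg k N h =>
      exact ⟨(TRep.neg _ _ (ih h).1).of_eq (by ring), (TRep.neg _ _ (ih h).2).of_eq (by ring)⟩

theorem TRep.inv {k : ℕ} {N : ℤ} (h : TRep k N) :
    (∃ M, N = 2 * M ∧ TRep k M) ∨
      ∃ j M, k = j + 1 ∧ (N = 2 * M + 1 ∨ N = 2 * M - 1) ∧ TRep j M := by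
  cases h with
  | zero => exact Or.inl ⟨0, by ring, .zero _⟩
  | dbl _ M h => exact Or.inl ⟨M, rfl, h⟩
  | pos j M h => exact Or.inr ⟨j, M, rfl, Or.inl rfl, h⟩
  | neg j M h => exact Or.inr ⟨j, M, rfl, Or.inr rfl, h⟩

theorem TRep.half {k : ℕ} {N : ℤ} (h : TRep k (2 * N)) : TRep k N := by
  rcases h.inv with ⟨M, e, h⟩ | ⟨j, M, _, e | e, _⟩
  · exact h.of_eq (by omega)
  · omega
  · omega

theorem TRep.quarter {k : ℕ} {N : ℤ} (h : TRep k (4 * N + 1)) : ∃ j, k = j + 1 ∧ TRep j N := by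
  rcases h.inv with ⟨M, e, h⟩ | ⟨j, M, hk, e | e, h⟩
  · omega
  · exact ⟨j, hk, (h.of_eq (show M = 2 * N by omega)).half⟩
  · refine ⟨j, hk, ?_⟩
    rcases h.inv with ⟨L, e', h'⟩ | ⟨i, L, hi, e' | e', h'⟩
    · omega
    · subst hi
      exact h'.succ.of_eq (by omega)
    · subst hi
      exact h'.add_one.2.of_eq (by omega)

/-- `TSparse l m N`: `N` is written with `l` binary digits, with `m` ones, no two adjacent. -/
inductive TSparse : ℕ → ℕ → ℤ → Prop
  | zero : TSparse 0 0 0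
  | dbl (l m : ℕ) (N : ℤ) : TSparse l m N → TSparse (l + 1) m (2 * N)
  | one (l m : ℕ) (N : ℤ) : TSparse l m N → TSparse (l + 2) (m + 1) (4 * N + 1)

theorem TSparse.le {l m : ℕ} {N : ℤ} (h : TSparse l m N) : ∀ {k : ℕ}, TRep k N → m ≤ k := by
  induction h with
  | zero => intro k _; exact Nat.zero_le _
  | dbl l m N _ ih => intro k hk; exact ih hk.half
  | one l m N _ ih =>
    intro k hk
    obtain ⟨j, rfl, hj⟩ := hk.quarter
    exact Nat.succ_le_succ (ih hj)

theorem TSparse.congr {l l' m m' : ℕ} {N N' : ℤ} (h : TSparse l m N) (h1 : l = l') (h2 : m = m')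
    (h3 : N = N') : TSparse l' m' N' := by subst h1 h2 h3; exact h

theorem TSparse.concat {l m : ℕ} {N : ℤ} (h : TSparse l m N) {l' m' : ℕ} {N' : ℤ}
    (h' : TSparse l' m' N') : TSparse (l + l') (m + m') (N + 2 ^ l * N') := by
  induction h with
  | zero => exact h'.congr (by ring) (by ring) (by ring)
  | dbl l m N _ ih => exact (TSparse.dbl _ _ _ ih).congr (by ring) (by ring) (by ring)
  | one l m N _ ih => exact (TSparse.one _ _ _ ih).congr (by ring) (by ring) (by ring)

theorem TSparse.pad (j : ℕ) : TSparse j 0 0 := by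
  induction j with
  | zero => exact .zero
  | succ j ih => exact (TSparse.dbl _ _ _ ih).congr rfl rfl (by ring)

theorem tower_product_sparse (d : ℕ) : ∃ l, l ≤ tower (d + 2) ∧
    TSparse l (2 ^ d) (∏ i ∈ Finset.Icc 4 (d + 3), ((tower (i - 1) : ℤ) + 1)) := by
  induction d with
  | zero =>
    refine ⟨2, by decide, ?_⟩
    exact (TSparse.one _ _ _ TSparse.zero).congr rfl rfl (by simp)
  | succ d ih =>
    obtain ⟨l, hl, h⟩ := ih
    obtain ⟨j, hj⟩ := Nat.exists_eq_add_of_le hl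
    have hp : TSparse (tower (d + 2)) (2 ^ d) _ :=
      (h.concat (TSparse.pad j)).congr hj.symm (by ring) (by rw [mul_zero, add_zero])
    refine ⟨tower (d + 2) + l, ?_, (hp.concat h).congr rfl (by ring) ?_⟩
    · have h2 : tower (d + 1 + 2) = 2 ^ tower (d + 2) := rfl
      rw [h2]
      have h3 : ∀ x : ℕ, 2 * x ≤ 2 ^ x := by
        intro x
        cases x with
        | zero => simp
        | succ x => have := Nat.lt_two_pow_self (n := x); rw [pow_succ]; omega
      have := h3 (tower (d + 2))
      omega
    · rw [show d + 1 + 3 = (d + 3) + 1 by ring, Finset.prod_Icc_succ_top (by omega : 4 ≤ d + 3 + 1)]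
      have h2 : tower (d + 3 + 1 - 1) = 2 ^ tower (d + 2) := rfl
      rw [h2]
      push_cast
      ring

theorem PowerCircuit.eval_eq (P : PowerCircuit) (hP : P.Proper) (v : Fin P.n) :
    P.eval v = 0 ∨ ∃ a : ℕ, P.eval v = 2 ^ a := by
  have hs := P.evalSpec v
  split_ifs at hs with hz
  · exact Or.inl hs
  · right
    choose f hf using hP
    have e : (∑ w, (P.lab v w : ℝ) * P.eval w) = ((∑ w, P.lab v w * (f w : ℤ) : ℤ) : ℝ) := by
      push_cast
      exact Finset.sum_congr rfl fun w _ => by rw [hf w]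
    rw [e, Real.rpow_intCast] at hs
    generalize (∑ w, P.lab v w * (f w : ℤ) : ℤ) = z at hs
    rcases le_or_gt 0 z with h | h
    · obtain ⟨a, rfl⟩ := Int.eq_ofNat_of_zero_le h
      exact ⟨a, by simpa using hs⟩
    · exfalso
      have h1 : (2 : ℝ) ^ z < 1 := zpow_lt_one_of_neg₀ (by norm_num) h
      have h0 : (0 : ℝ) < 2 ^ z := by positivity
      rw [← hs, hf v] at h1 h0
      have h1' : f v < 1 := by exact_mod_cast h1
      have h0' : 0 < f v := by exact_mod_cast h0
      omega

theorem PowerCircuit.value_rep (P : PowerCircuit) (hP : P.Proper) (S : Finset (Fin P.n))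
    (hS : S ⊆ P.M) : ∃ N : ℤ, (∑ v ∈ S, (P.nu v : ℝ) * P.eval v) = N ∧ TRep S.card N := by
  induction S using Finset.induction_on with
  | empty => exact ⟨0, by simp, .zero _⟩
  | insert v S hv ih =>
    obtain ⟨N, hN, h⟩ := ih fun x hx => hS (Finset.mem_insert_of_mem hx)
    rw [Finset.sum_insert hv, Finset.card_insert_of_notMem hv, hN]
    rcases P.eval_eq hP v with e | ⟨a, e⟩
    · exact ⟨N, by rw [e]; simp, h.succ⟩
    · rcases P.nuValid v (hS (Finset.mem_insert_self _ _)) with s | s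
      · exact ⟨N + 2 ^ a, by rw [e, s]; push_cast; ring, (h.add_pow a).1⟩
      · exact ⟨N - 2 ^ a, by rw [e, s]; push_cast; ring, (h.add_pow a).2⟩

/-- For every `n ≥ 4`, every constant power circuit properly representing the
product `∏_{i=4}^{n} (tower (i-1) + 1)` has at least `2^(n-3)` vertices. -/
theorem circuit_for_tower_product_has_many_vertices (n : ℕ) (hn : 4 ≤ n)
    (P : PowerCircuit) (hP : P.Proper)
    (hval : P.value = ∏ i ∈ Finset.Icc 4 n, ((tower (i - 1) : ℝ) + 1)) :
    2 ^ (n - 3) ≤ P.n := by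
  obtain ⟨d, rfl⟩ := Nat.exists_eq_add_of_le (show 3 ≤ n by omega)
  obtain ⟨N, hN, h⟩ := P.value_rep hP P.M (Finset.Subset.refl _)
  obtain ⟨l, _, hl⟩ := tower_product_sparse d
  have e : N = ∏ i ∈ Finset.Icc 4 (d + 3), ((tower (i - 1) : ℤ) + 1) := by
    have h1 : (N : ℝ) = ∏ i ∈ Finset.Icc 4 (3 + d), ((tower (i - 1) : ℝ) + 1) := by
      rw [← hN, ← hval]; rfl
    rw [add_comm 3 d] at h1
    exact_mod_cast h1
  rw [← e] at hl
  have h1 := hl.le h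
  have h2 : P.M.card ≤ P.n := by simpa using Finset.card_le_univ P.M
  rw [Nat.add_sub_cancel_left]
  exact h1.trans h2
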